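/- Let (M,h) be a Riemannian manifold of negative Ricci curvature. Then (M,h) admits no nowhere-vanishing Killing vector field of constant length; in particular M admits no strong Kropina metric with underlying Riemannian metric h. -/

import Mathlib

noncomputable section

open scoped BigOperators ENNReal

/-- Model space: `ℝⁿ` as a chart of the manifold `M`. -/
abbrev Evec (n : ℕ) := EuclideanSpace ℝ (Fin n)

/-- A (pointwise bilinear-form valued) metric tensor on `ℝⁿ`. -/
abbrev MetricT (n : ℕ) := Evec n → (Evec n →L[ℝ] Evec n →L[ℝ] ℝ)

/-- A metric tensor is Riemannian: smooth, symmetric and positive definite. -/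
def IsRiemannian {n : ℕ} (g : MetricT n) : Prop :=
  ContDiff ℝ (⊤ : ℕ∞) g ∧ (∀ x u v, g x u v = g x v u) ∧ (∀ x v, v ≠ 0 → 0 < g x v v)

/-- Lie bracket of vector fields on `ℝⁿ`. -/
def VBracket {n : ℕ} (X Y : Evec n → Evec n) : Evec n → Evec n :=
  fun x => fderiv ℝ Y x (X x) - fderiv ℝ X x (Y x)

/-- The Lie derivative `(L_W g)(X,Y)` of the metric `g` along `W`, evaluated on
vector fields `X`, `Y`. -/
def LieDerivMetric {n : ℕ} (g : MetricT n) (W X Y : Evec n → Evec n) : Evec n → ℝ :=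
  fun x => fderiv ℝ (fun p => g p (X p) (Y p)) x (W x)
    - g x (VBracket W X x) (Y x) - g x (X x) (VBracket W Y x)

/-- `W` is a Killing field of `g` : `L_W g = 0`. -/
def IsKillingField {n : ℕ} (g : MetricT n) (W : Evec n → Evec n) : Prop :=
  ∀ X Y : Evec n → Evec n, ContDiff ℝ (⊤ : ℕ∞) X → ContDiff ℝ (⊤ : ℕ∞) Y →
    ∀ x, LieDerivMetric g W X Y x = 0

/-- The Levi-Civita connection of `g`, given as a covariant derivative operator on
vector fields which is tensorial in the first slot, a derivation in the second slot,
torsion free, and metric compatible. -/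
structure LeviCivita {n : ℕ} (g : MetricT n) where
  nab : (Evec n → Evec n) → (Evec n → Evec n) → (Evec n → Evec n)
  compat : ∀ X Y Z : Evec n → Evec n, ContDiff ℝ (⊤ : ℕ∞) X → ContDiff ℝ (⊤ : ℕ∞) Y → ContDiff ℝ (⊤ : ℕ∞) Z →
    ∀ x, fderiv ℝ (fun p => g p (Y p) (Z p)) x (X x)
      = g x (nab X Y x) (Z x) + g x (Y x) (nab X Z x)
  torsion_free : ∀ X Y : Evec n → Evec n, ContDiff ℝ (⊤ : ℕ∞) X → ContDiff ℝ (⊤ : ℕ∞) Y →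
    ∀ x, nab X Y x - nab Y X x = VBracket X Y x
  tensorial : ∀ (f : Evec n → ℝ) (X Y : Evec n → Evec n) (x : Evec n),
    nab (fun p => f p • X p) Y x = f x • nab X Y x
  leibniz : ∀ (f : Evec n → ℝ) (X Y : Evec n → Evec n), ContDiff ℝ (⊤ : ℕ∞) f → ContDiff ℝ (⊤ : ℕ∞) Y →
    ∀ x, nab X (fun p => f p • Y p) x = fderiv ℝ f x (X x) • Y x + f x • nab X Y x

/-- A curve `c` is a geodesic for the covariant derivative `nab`: for every smooth
extension `V` of its velocity field, `∇_V V` vanishes along `c`. -/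
def IsGeodesicC {n : ℕ}
    (nab : (Evec n → Evec n) → (Evec n → Evec n) → (Evec n → Evec n))
    (c : ℝ → Evec n) : Prop :=
  ∀ V : Evec n → Evec n, ContDiff ℝ (⊤ : ℕ∞) V → (∀ t, V (c t) = deriv c t) →
    ∀ t, nab V V (c t) = 0

/-- The curvature tensor `R(u,v)w` at `x` (computed with constant extensions). -/
def RCurv {n : ℕ}
    (nab : (Evec n → Evec n) → (Evec n → Evec n) → (Evec n → Evec n))
    (u v w : Evec n) : Evec n → Evec n :=
  fun x => nab (fun _ => u) (nab (fun _ => v) (fun _ => w)) x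
    - nab (fun _ => v) (nab (fun _ => u) (fun _ => w)) x
    - nab (VBracket (fun _ => u) (fun _ => v)) (fun _ => w) x

/-- Ricci curvature `Ric_x(u,v)` as the trace (in the standard basis) of
`w ↦ R(w,u)v`. -/
def RicciCurv {n : ℕ}
    (nab : (Evec n → Evec n) → (Evec n → Evec n) → (Evec n → Evec n))
    (x u v : Evec n) : ℝ :=
  ∑ i : Fin n, (RCurv nab (EuclideanSpace.single i 1) u v x) i

set_option maxSynthPendingDepth 3

open ContinuousLinearMap

/-- The metric at a point, as an endomorphism to the dual, is invertible. -/
theorem IsRiemannian.exists_equiv {n : ℕ} {g : MetricT n} (hg : IsRiemannian g) (x : Evec n) :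
    ∃ e : Evec n ≃L[ℝ] (Evec n →L[ℝ] ℝ), (e : Evec n →L[ℝ] Evec n →L[ℝ] ℝ) = g x := by
  have hinj : Function.Injective (g x) := by
    rw [injective_iff_map_eq_zero]
    intro v hv
    by_contra hne
    have h := hg.2.2 x v hne
    rw [hv] at h
    simp at h
  have hdim : Module.finrank ℝ (Evec n) = Module.finrank ℝ (Evec n →L[ℝ] ℝ) := by
    rw [← (LinearMap.toContinuousLinearMap (𝕜 := ℝ) (E := Evec n) (F' := ℝ)).finrank_eq]
    exact (Subspace.dual_finrank_eq (K := ℝ) (V := Evec n)).symm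
  refine ⟨(LinearEquiv.ofInjectiveOfFinrankEq (g x : Evec n →ₗ[ℝ] Evec n →L[ℝ] ℝ)
    hinj hdim).toContinuousLinearEquiv, ?_⟩
  ext u v
  rfl

theorem IsRiemannian.ext {n : ℕ} {g : MetricT n} (hg : IsRiemannian g) (x : Evec n)
    {u v : Evec n} (h : ∀ z, g x u z = g x v z) : u = v := by
  obtain ⟨e, he⟩ := hg.exists_equiv x
  apply e.injective
  ext z
  have := h z
  rw [← he] at this
  exact this

/-- The Christoffel symbols of the first kind, with the last index lowered. -/
def koszulForm {n : ℕ} (g : MetricT n) (x : Evec n) :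
    Evec n →L[ℝ] Evec n →L[ℝ] Evec n →L[ℝ] ℝ :=
  (2⁻¹ : ℝ) • (fderiv ℝ g x + (fderiv ℝ g x).flip -
    ((flipₗᵢ ℝ (Evec n) (Evec n) ℝ).toContinuousLinearEquiv :
      (Evec n →L[ℝ] Evec n →L[ℝ] ℝ) →L[ℝ] (Evec n →L[ℝ] Evec n →L[ℝ] ℝ)) ∘L
      (fderiv ℝ g x).flip)

theorem koszulForm_apply {n : ℕ} (g : MetricT n) (x u v z : Evec n) :
    koszulForm g x u v z =
      2⁻¹ * (fderiv ℝ g x u v z + fderiv ℝ g x v u z - fderiv ℝ g x z u v) := rfl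

/-- The Christoffel symbols of `g`. -/
def christoffel {n : ℕ} (g : MetricT n) (x : Evec n) : Evec n →L[ℝ] Evec n →L[ℝ] Evec n :=
  (compL ℝ (Evec n) (Evec n →L[ℝ] ℝ) (Evec n) (inverse (g x))) ∘L koszulForm g x

theorem metric_christoffel {n : ℕ} {g : MetricT n} (hg : IsRiemannian g) (x u v : Evec n) :
    g x (christoffel g x u v) = koszulForm g x u v := by
  obtain ⟨e, he⟩ := hg.exists_equiv x
  change g x (inverse (g x) (koszulForm g x u v)) = _
  rw [← he, inverse_equiv]
  simp

theorem contDiff_koszulForm {n : ℕ} {g : MetricT n} (hg : IsRiemannian g) :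
    ContDiff ℝ (⊤ : ℕ∞) (koszulForm g) := by
  have h : ContDiff ℝ (⊤ : ℕ∞) (fderiv ℝ g) := hg.1.fderiv_right (by simp)
  have hf : ContDiff ℝ (⊤ : ℕ∞) (fun x => (fderiv ℝ g x).flip) :=
    (flipₗᵢ ℝ (Evec n) (Evec n) (Evec n →L[ℝ] ℝ)).contDiff.comp h
  exact ((h.add hf).sub (contDiff_const.clm_comp hf)).const_smul _

theorem contDiff_christoffel {n : ℕ} {g : MetricT n} (hg : IsRiemannian g) :
    ContDiff ℝ (⊤ : ℕ∞) (christoffel g) := by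
  have hinv : ContDiff ℝ (⊤ : ℕ∞) (fun x => inverse (g x)) := by
    rw [contDiff_iff_contDiffAt]
    intro x
    obtain ⟨e, he⟩ := hg.exists_equiv x
    have := contDiffAt_map_inverse (n := ((⊤ : ℕ∞) : WithTop ℕ∞)) e
    rw [he] at this
    exact this.comp x hg.1.contDiffAt
  exact ((compL ℝ (Evec n) (Evec n →L[ℝ] ℝ) (Evec n)).contDiff.comp hinv).clm_comp
    (contDiff_koszulForm hg)

theorem fderiv_metric_const {n : ℕ} {g : MetricT n} (hg : IsRiemannian g) (x u v z : Evec n) :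
    fderiv ℝ (fun p => g p v z) x u = fderiv ℝ g x u v z := by
  have h := (hg.1.differentiable (by simp) x).hasFDerivAt
  have := ((h.clm_apply (hasFDerivAt_const v x)).clm_apply (hasFDerivAt_const z x)).fderiv
  rw [this]
  simp

theorem fderiv_metric_symm {n : ℕ} {g : MetricT n} (hg : IsRiemannian g) (x u v z : Evec n) :
    fderiv ℝ g x u v z = fderiv ℝ g x u z v := by
  rw [← fderiv_metric_const hg, ← fderiv_metric_const hg]
  simp_rw [hg.2.1 _ v z]

theorem christoffel_symm {n : ℕ} {g : MetricT n} (hg : IsRiemannian g) (x u v : Evec n) :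
    christoffel g x u v = christoffel g x v u := by
  refine hg.ext x fun z => ?_
  rw [metric_christoffel hg, metric_christoffel hg, koszulForm_apply, koszulForm_apply,
    fderiv_metric_symm hg x z u v]
  ring

theorem fderiv_metric_eq {n : ℕ} {g : MetricT n} (hg : IsRiemannian g) (x u v z : Evec n) :
    fderiv ℝ g x u v z = g x (christoffel g x u v) z + g x v (christoffel g x u z) := by
  rw [hg.2.1 x v, metric_christoffel hg, metric_christoffel hg, koszulForm_apply,
    koszulForm_apply, fderiv_metric_symm hg x u z v, fderiv_metric_symm hg x v u z,
    fderiv_metric_symm hg x z u v]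
  ring

theorem LeviCivita.nab_const_const {n : ℕ} {g : MetricT n} (hg : IsRiemannian g)
    (LC : LeviCivita g) (x u v : Evec n) :
    LC.nab (fun _ => u) (fun _ => v) x = christoffel g x u v := by
  have hc (a b c : Evec n) : fderiv ℝ g x a b c =
      g x (LC.nab (fun _ => a) (fun _ => b) x) c + g x b (LC.nab (fun _ => a) (fun _ => c) x) := by
    rw [← fderiv_metric_const hg]
    exact LC.compat (fun _ => a) (fun _ => b) (fun _ => c)
      contDiff_const contDiff_const contDiff_const x
  have ht (a b : Evec n) :
      LC.nab (fun _ => a) (fun _ => b) x = LC.nab (fun _ => b) (fun _ => a) x := by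
    have := LC.torsion_free (fun _ => a) (fun _ => b) contDiff_const contDiff_const x
    simpa [VBracket, sub_eq_zero] using this
  refine hg.ext x fun z => ?_
  rw [metric_christoffel hg, koszulForm_apply, hc u v z, hc v u z, hc z u v, ht v u, ht z u,
    ht z v, hg.2.1 x v, hg.2.1 x u]
  ring

theorem LeviCivita.nab_const {n : ℕ} {g : MetricT n} (hg : IsRiemannian g)
    (LC : LeviCivita g) {Y : Evec n → Evec n} (hY : ContDiff ℝ (⊤ : ℕ∞) Y) (x u : Evec n) :
    LC.nab (fun _ => u) Y x = fderiv ℝ Y x u + christoffel g x u (Y x) := by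
  refine hg.ext x fun z => ?_
  have h := LC.compat (fun _ => u) Y (fun _ => z) contDiff_const hY contDiff_const x
  have hgx := (hg.1.differentiable (by simp) x).hasFDerivAt
  have hYx := (hY.differentiable (by simp) x).hasFDerivAt
  rw [((hgx.clm_apply hYx).clm_apply (hasFDerivAt_const z x)).fderiv,
    LC.nab_const_const hg] at h
  simp only [add_apply, flip_apply, coe_comp, Function.comp_apply, zero_apply, map_zero,
    zero_add, fderiv_metric_eq hg x u (Y x) z] at h
  simp only [map_add, add_apply]
  linarith

/-- The trace of a continuous endomorphism of `ℝⁿ`. -/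
def clmTrace (n : ℕ) : (Evec n →L[ℝ] Evec n) →L[ℝ] ℝ :=
  ∑ i : Fin n, (EuclideanSpace.proj i : Evec n →L[ℝ] ℝ) ∘L
    (apply ℝ (Evec n) (EuclideanSpace.single i (1 : ℝ)))

theorem clmTrace_apply {n : ℕ} (L : Evec n →L[ℝ] Evec n) :
    clmTrace n L = ∑ i : Fin n, (L (EuclideanSpace.single i 1)) i := by
  simp [clmTrace, sum_apply]

theorem clmTrace_eq_trace {n : ℕ} (L : Evec n →L[ℝ] Evec n) :
    clmTrace n L = LinearMap.trace ℝ (Evec n) L := by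
  rw [clmTrace_apply, LinearMap.trace_eq_matrix_trace ℝ (EuclideanSpace.basisFun (Fin n) ℝ).toBasis]
  simp [Matrix.trace, LinearMap.toMatrix_apply]

theorem clmTrace_comp_comm {n : ℕ} (L M : Evec n →L[ℝ] Evec n) :
    clmTrace n (L ∘L M) = clmTrace n (M ∘L L) := by
  rw [clmTrace_eq_trace, clmTrace_eq_trace]
  exact LinearMap.trace_mul_comm ℝ (L : Evec n →ₗ[ℝ] Evec n) (M : Evec n →ₗ[ℝ] Evec n)

theorem exists_clmTrace_eq_sum {n : ℕ} {g : MetricT n} (hg : IsRiemannian g) (x : Evec n) :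
    ∃ b : Module.Basis (Fin (Module.finrank ℝ (Evec n))) ℝ (Evec n),
      ∀ L : Evec n →L[ℝ] Evec n, clmTrace n L = ∑ i, g x (L (b i)) (b i) / g x (b i) (b i) := by
  let B : LinearMap.BilinForm ℝ (Evec n) :=
    LinearMap.mk₂ ℝ (fun u v => g x u v) (by simp) (by simp) (by simp) (by simp)
  obtain ⟨b, hb⟩ := LinearMap.BilinForm.exists_orthogonal_basis (B := B)
    ⟨fun u v => hg.2.1 x u v⟩
  refine ⟨b, fun L => ?_⟩
  rw [clmTrace_eq_trace, LinearMap.trace_eq_matrix_trace ℝ b, Matrix.trace]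
  refine Finset.sum_congr rfl fun i _ => ?_
  rw [Matrix.diag_apply, LinearMap.toMatrix_apply,
    eq_div_iff (hg.2.2 x (b i) (b.ne_zero i)).ne']
  conv_rhs => rw [← b.sum_repr (L (b i))]
  rw [map_sum, sum_apply, Finset.sum_eq_single i]
  · simp
  · intro j _ hj
    have : g x (b j) (b i) = 0 := hb hj
    simp [this]
  · simp

/-- A skew-adjoint endomorphism is trace free. -/
theorem clmTrace_eq_zero_of_skew {n : ℕ} {g : MetricT n} (hg : IsRiemannian g) {x : Evec n}
    {A : Evec n →L[ℝ] Evec n} (hA : ∀ u v, g x (A u) v + g x u (A v) = 0) :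
    clmTrace n A = 0 := by
  obtain ⟨b, hb⟩ := exists_clmTrace_eq_sum hg x
  rw [hb]
  refine Finset.sum_eq_zero fun i _ => ?_
  have h := hA (b i) (b i)
  rw [hg.2.1 x (b i) (A (b i))] at h
  rw [show g x (A (b i)) (b i) = 0 by linarith, zero_div]

/-- The square of a skew-adjoint endomorphism has nonpositive trace. -/
theorem clmTrace_comp_self_nonpos_of_skew {n : ℕ} {g : MetricT n} (hg : IsRiemannian g)
    {x : Evec n} {A : Evec n →L[ℝ] Evec n} (hA : ∀ u v, g x (A u) v + g x u (A v) = 0) :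
    clmTrace n (A ∘L A) ≤ 0 := by
  have hnn (v : Evec n) : 0 ≤ g x v v := by
    rcases eq_or_ne v 0 with rfl | hv
    · simp
    · exact (hg.2.2 x v hv).le
  obtain ⟨b, hb⟩ := exists_clmTrace_eq_sum hg x
  rw [hb]
  refine Finset.sum_nonpos fun i _ => div_nonpos_of_nonpos_of_nonneg ?_ (hnn _)
  have h := hA (A (b i)) (b i)
  have := hnn (A (b i))
  simp only [coe_comp, Function.comp_apply]
  linarith

/-- The covariant differential `u ↦ ∇_u W`. -/
def covDifferential {n : ℕ} (g : MetricT n) (W : Evec n → Evec n) (x : Evec n) :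
    Evec n →L[ℝ] Evec n :=
  fderiv ℝ W x + (christoffel g x).flip (W x)

theorem covDifferential_apply {n : ℕ} (g : MetricT n) (W : Evec n → Evec n) (x u : Evec n) :
    covDifferential g W x u = fderiv ℝ W x u + christoffel g x u (W x) := rfl

theorem IsKillingField.skew {n : ℕ} {g : MetricT n} (hg : IsRiemannian g)
    {W : Evec n → Evec n} (hK : IsKillingField g W) (x u v : Evec n) :
    g x (covDifferential g W x u) v + g x u (covDifferential g W x v) = 0 := by
  have h := hK (fun _ => u) (fun _ => v) contDiff_const contDiff_const x
  simp only [LieDerivMetric, VBracket, fderiv_metric_const hg, fderiv_metric_eq hg,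
    fderiv_fun_const, Pi.zero_apply, zero_apply, zero_sub, map_neg, neg_apply] at h
  rw [covDifferential_apply, covDifferential_apply, christoffel_symm hg x u,
    christoffel_symm hg x v]
  simp only [map_add, add_apply]
  linarith

theorem IsKillingField.covDifferential_self {n : ℕ} {g : MetricT n} (hg : IsRiemannian g)
    (LC : LeviCivita g) {W : Evec n → Evec n} (hW : ContDiff ℝ (⊤ : ℕ∞) W)
    (hK : IsKillingField g W) {c : ℝ} (hc : ∀ x, g x (W x) (W x) = c) (x : Evec n) :
    covDifferential g W x (W x) = 0 := by
  refine hg.ext x fun z => ?_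
  have h := LC.compat (fun _ => z) W W contDiff_const hW hW x
  simp only [hc, LC.nab_const hg hW, ← covDifferential_apply, fderiv_fun_const, Pi.zero_apply,
    zero_apply] at h
  have h' := hK.skew hg x (W x) z
  rw [hg.2.1 x (W x)] at h h'
  simp only [map_zero, zero_apply]
  linarith

theorem ricciCurv_eq {n : ℕ} {g : MetricT n} (hg : IsRiemannian g) (LC : LeviCivita g)
    (x w : Evec n) :
    RicciCurv LC.nab x w w = clmTrace n
      ((((apply ℝ (Evec n) w) ∘L (apply ℝ (Evec n →L[ℝ] Evec n) w)) ∘L fderiv ℝ (christoffel g) x)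
        + (christoffel g x).flip (christoffel g x w w)
        - (fderiv ℝ (christoffel g) x w).flip w
        - (christoffel g x w) ∘L ((christoffel g x).flip w)) := by
  have hΓ := contDiff_christoffel hg
  have hsm (u v : Evec n) : ContDiff ℝ (⊤ : ℕ∞) (fun p => christoffel g p u v) :=
    (hΓ.clm_apply contDiff_const).clm_apply contDiff_const
  have hder (u v e : Evec n) : fderiv ℝ (fun p => christoffel g p u v) x e =
      fderiv ℝ (christoffel g) x e u v := by
    have h := (hΓ.differentiable (by simp) x).hasFDerivAt
    rw [((h.clm_apply (hasFDerivAt_const u x)).clm_apply (hasFDerivAt_const v x)).fderiv]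
    simp
  have hnab (u v : Evec n) : LC.nab (fun _ => u) (fun _ => v) = fun p => christoffel g p u v :=
    funext fun p => LC.nab_const_const hg p u v
  rw [clmTrace_apply, RicciCurv]
  refine Finset.sum_congr rfl fun i _ => ?_
  have hbr (u v : Evec n) : VBracket (fun _ => u) (fun _ => v) = fun _ => (0 : Evec n) := by
    funext p
    simp [VBracket]
  simp only [RCurv, hbr, hnab, LC.nab_const hg (hsm _ _), hder]
  simp
  ring

/-- A Killing field of constant length has nonnegative Ricci curvature along itself. -/
theorem IsKillingField.ricciCurv_nonneg {n : ℕ} {g : MetricT n} (hg : IsRiemannian g)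
    (LC : LeviCivita g) {W : Evec n → Evec n} (hW : ContDiff ℝ (⊤ : ℕ∞) W)
    (hK : IsKillingField g W) {c : ℝ} (hc : ∀ x, g x (W x) (W x) = c) (x : Evec n) :
    0 ≤ RicciCurv LC.nab x (W x) (W x) := by
  have hΓx := ((contDiff_christoffel hg).differentiable (by simp) x).hasFDerivAt
  have hWx := (hW.differentiable (by simp) x).hasFDerivAt
  have hDW : ContDiff ℝ (⊤ : ℕ∞) (fderiv ℝ W) := hW.fderiv_right (by simp)
  have hDWx := (hDW.differentiable (by simp) x).hasFDerivAt
  have hsymm : ∀ u v, fderiv ℝ (fderiv ℝ W) x u v = fderiv ℝ (fderiv ℝ W) x v u :=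
    (hW.contDiffAt (x := x)).isSymmSndFDerivAt (by
      simpa using WithTop.coe_le_coe.2 (le_top : (2 : ℕ∞) ≤ ⊤))
  have hflip := ((flipₗᵢ ℝ (Evec n) (Evec n)
    (Evec n)).toContinuousLinearEquiv.hasFDerivAt).comp x hΓx
  have hA : HasFDerivAt (covDifferential g W) _ x := hDWx.add (hflip.clm_apply hWx)
  have hAW : (fun p => covDifferential g W p (W p)) = fun _ => 0 :=
    funext (hK.covDifferential_self hg LC hW hc)
  have htr : (fun p => clmTrace n (covDifferential g W p)) = fun _ => 0 :=
    funext fun p => clmTrace_eq_zero_of_skew hg (hK.skew hg p)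
  have hdW : fderiv ℝ W x (W x) = -christoffel g x (W x) (W x) :=
    eq_neg_of_add_eq_zero_left (hK.covDifferential_self hg LC hW hc x)
  have hDAW (e : Evec n) : fderiv ℝ (christoffel g) x e (W x) (W x) =
      -(covDifferential g W x (fderiv ℝ W x e) + fderiv ℝ (fderiv ℝ W) x e (W x) +
        christoffel g x (W x) (fderiv ℝ W x e)) := by
    have h := (hA.clm_apply hWx).fderiv
    rw [hAW] at h
    have h' := DFunLike.congr_fun h e
    simp at h'
    rw [eq_neg_iff_add_eq_zero, h']
    abel
  have hDtr : clmTrace n (fderiv ℝ (fderiv ℝ W) x (W x) +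
      (christoffel g x).flip (fderiv ℝ W x (W x)) +
      (fderiv ℝ (christoffel g) x (W x)).flip (W x)) = 0 := by
    have h := ((clmTrace n).hasFDerivAt.comp x hA).fderiv
    rw [show (clmTrace n ∘ covDifferential g W) = _ from htr] at h
    have h' := DFunLike.congr_fun h (W x)
    simp at h'
    rw [map_add, map_add, add_assoc]
    exact h'.symm
  have hcomm := clmTrace_comp_comm (fderiv ℝ W x) (christoffel g x (W x))
  have hsq := clmTrace_comp_self_nonpos_of_skew hg (hK.skew hg x)
  rw [ricciCurv_eq hg LC]
  have hop : (((apply ℝ (Evec n) (W x)) ∘L (apply ℝ (Evec n →L[ℝ] Evec n) (W x))) ∘L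
        fderiv ℝ (christoffel g) x)
        + (christoffel g x).flip (christoffel g x (W x) (W x))
        - (fderiv ℝ (christoffel g) x (W x)).flip (W x)
        - (christoffel g x (W x)) ∘L ((christoffel g x).flip (W x)) =
      -(covDifferential g W x ∘L covDifferential g W x) -
        (fderiv ℝ (fderiv ℝ W) x (W x) + (christoffel g x).flip (fderiv ℝ W x (W x)) +
          (fderiv ℝ (christoffel g) x (W x)).flip (W x)) +
        (fderiv ℝ W x ∘L christoffel g x (W x) - christoffel g x (W x) ∘L fderiv ℝ W x) := by
    refine ContinuousLinearMap.ext fun e => ?_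
    simp only [add_apply, sub_apply, neg_apply, coe_comp, Function.comp_apply, flip_apply,
      apply_apply, hDAW, hdW, map_neg]
    rw [covDifferential_apply g W x e, map_add, covDifferential_apply g W x (christoffel g x e _),
      hsymm e, christoffel_symm hg x (christoffel g x e _), christoffel_symm hg x e (W x)]
    abel
  rw [hop, map_add, map_sub, map_neg, hDtr, map_sub, hcomm]
  linarith

/-- A Riemannian manifold `(M,h)` of negative Ricci curvature admits no
nowhere-vanishing Killing vector field of constant length; in particular `M` admits no
strong Kropina metric with underlying Riemannian metric `h` (i.e. no unit-length Killing
field). -/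
theorem no_strong_kropina_on_negative_ricci {n : ℕ} (g : MetricT n)
    (hg : IsRiemannian g) (LC : LeviCivita g)
    (hneg : ∀ x v, v ≠ 0 → RicciCurv LC.nab x v v < 0) :
    (¬ ∃ W : Evec n → Evec n, ContDiff ℝ (⊤ : ℕ∞) W ∧ IsKillingField g W ∧
      (∀ x, W x ≠ 0) ∧ (∃ c : ℝ, ∀ x, g x (W x) (W x) = c)) ∧
    (¬ ∃ W : Evec n → Evec n, ContDiff ℝ (⊤ : ℕ∞) W ∧ IsKillingField g W ∧
      ∀ x, g x (W x) (W x) = 1) := by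
  refine ⟨?_, ?_⟩
  · rintro ⟨W, hW, hK, hne, c, hc⟩
    exact (hneg 0 (W 0) (hne 0)).not_ge (hK.ricciCurv_nonneg hg LC hW hc 0)
  · rintro ⟨W, hW, hK, hc⟩
    refine (hneg 0 (W 0) fun h => ?_).not_ge (hK.ricciCurv_nonneg hg LC hW hc 0)
    have := hc 0
    simp [h] at this
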